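/- arXiv:2405.20197 — 4 statements merged into one kernel-verified Lean document; each statement's English description precedes it below -/
import Mathlib

section
/- The monoid M_1 is not singly aligned: the set A_1M_1 ∩ dM_1 is nonempty, yet there is no r ∈ M_1 with A_1M_1 ∩ dM_1 = rM_1. -/
namespace Malcev

/-- The alphabet `X_n`: letters `a, b, c, d` together with `A_i, B_i, C_i, D_i`
for `i` ranging over `Fin n` (so `A ⟨0, _⟩` represents `A_1`, etc.). -/
inductive Letter (n : ℕ) : Type
  | a | b | c | d
  | A (i : Fin n) | B (i : Fin n) | C (i : Fin n) | D (i : Fin n)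
  deriving DecidableEq

open FreeMonoid

/-- The defining relations `ρ_n`. -/
inductive rel (n : ℕ) : FreeMonoid (Letter n) → FreeMonoid (Letter n) → Prop
  | da (h : 0 < n) :
      rel n (of .d * of .a) (of (.A ⟨0, h⟩) * of (.C ⟨0, h⟩))
  | AD (i : ℕ) (h : i + 1 < n) :
      rel n (of (.A ⟨i, Nat.lt_of_succ_lt h⟩) * of (.D ⟨i, Nat.lt_of_succ_lt h⟩))
            (of (.A ⟨i + 1, h⟩) * of (.C ⟨i + 1, h⟩))
  | An (h : 0 < n) :
      rel n (of (.A ⟨n - 1, Nat.sub_lt h Nat.one_pos⟩) * of (.D ⟨n - 1, Nat.sub_lt h Nat.one_pos⟩))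
            (of .d * of .b)
  | cb (h : 0 < n) :
      rel n (of .c * of .b)
            (of (.B ⟨n - 1, Nat.sub_lt h Nat.one_pos⟩) * of (.D ⟨n - 1, Nat.sub_lt h Nat.one_pos⟩))
  | BC (i : ℕ) (h : i + 1 < n) :
      rel n (of (.B ⟨i + 1, h⟩) * of (.C ⟨i + 1, h⟩))
            (of (.B ⟨i, Nat.lt_of_succ_lt h⟩) * of (.D ⟨i, Nat.lt_of_succ_lt h⟩))

/-- The congruence on the free monoid generated by `ρ_n`. -/
def Mcon (n : ℕ) : Con (FreeMonoid (Letter n)) := conGen (rel n)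

/-- The presented monoid `M_n = Mon⟨X_n | ρ_n⟩`. -/
abbrev Mn (n : ℕ) : Type := (Mcon n).Quotient

/-- The quotient (natural) map `X_n* → M_n`. -/
def mk (n : ℕ) : FreeMonoid (Letter n) →* Mn n := (Mcon n).mk'

/-- The image in `M_n` of a single letter. -/
def gen {n : ℕ} (x : Letter n) : Mn n := mk n (of x)

/-- The image in `M_n` of a word (given as a list of letters). -/
def word {n : ℕ} (w : List (Letter n)) : Mn n := mk n (ofList w)

/-- The set `P_n = {c, d, A_1, …, A_n, B_1, …, B_n}`. -/
def inP {n : ℕ} : Letter n → Prop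
  | .c => True | .d => True | .A _ => True | .B _ => True | _ => False

/-- The set `Q_n = {a, b, C_1, …, C_n, D_1, …, D_n}`. -/
def inQ {n : ℕ} : Letter n → Prop
  | .a => True | .b => True | .C _ => True | .D _ => True | _ => False

/-- `inR x y` means the two-letter word `xy` belongs to
`R_n = {db, A_1C_1, …, A_nC_n, B_1D_1, …, B_nD_n}`. -/
def inR {n : ℕ} : Letter n → Letter n → Prop
  | .d, .b => True
  | .A i, .C j => i = j
  | .B i, .D j => i = j
  | _, _ => False

/-- `inL x y` means the two-letter word `xy` belongs to
`L_n = {cb, da, A_1D_1, …, A_nD_n, B_2C_2, …, B_nC_n}`. -/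
def inL {n : ℕ} : Letter n → Letter n → Prop
  | .c, .b => True
  | .d, .a => True
  | .A i, .D j => i = j
  | .B i, .C j => i = j ∧ 1 ≤ i.val
  | _, _ => False

/-- A word is in left normal form if no two consecutive letters form a word in `R_n`. -/
def LeftNormal {n : ℕ} (w : List (Letter n)) : Prop :=
  List.Chain' (fun x y => ¬ inR x y) w

/-- `v ∈ M_n` is an intersection base if some word `a_1 ⋯ a_m` (`m ≥ 2`) in left
normal form equals `v` in `M_n` and its final two letters form a word in `L_n`. -/
def IsIntersectionBase {n : ℕ} (v : Mn n) : Prop :=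
  ∃ (w : List (Letter n)) (x y : Letter n),
    LeftNormal (w ++ [x, y]) ∧ word (w ++ [x, y]) = v ∧ inL x y

/-- The principal right ideal `pM_n`. -/
def rIdeal {n : ℕ} (p : Mn n) : Set (Mn n) := {x | ∃ m, x = p * m}

/-!
The relations of `M_n` preserve length, so elements of `M_n` have a well-defined length and a proper
right multiple is strictly longer. In `M_1` the distinct elements `A_1` and `d`, of length one, have
the distinct common right multiples `da = A_1C_1` and `db = A_1D_1`, of length two. A generator of
`A_1M_1 ∩ dM_1` would have length strictly between one and two.
-/

/-- A length function on a monoid: an additive `ℕ`-valued function that vanishes only at `1`. It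
makes proper right multiples strictly longer. -/
structure IsLengthFunction {M : Type*} [Monoid M] (ℓ : M → ℕ) : Prop where
  map_mul (x y : M) : ℓ (x * y) = ℓ x + ℓ y
  eq_one_of_eq_zero {x : M} : ℓ x = 0 → x = 1

namespace IsLengthFunction

variable {M : Type*} [Monoid M] {ℓ : M → ℕ} {p q r u v : M}

theorem lt_of_dvd_of_ne (hℓ : IsLengthFunction ℓ) (h : p ∣ r) (hne : p ≠ r) : ℓ p < ℓ r := by
  obtain ⟨k, rfl⟩ := h
  have hk : ℓ k ≠ 0 := fun h0 => hne (by rw [hℓ.eq_one_of_eq_zero h0, mul_one])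
  have := hℓ.map_mul p k
  omega

theorem lt_common_multiple (hℓ : IsLengthFunction ℓ) (hpq : p ≠ q) (hlen : ℓ p = ℓ q)
    (hp : p ∣ r) (hq : q ∣ r) : ℓ p < ℓ r := by
  by_cases h : p = r
  · exact hlen ▸ hℓ.lt_of_dvd_of_ne hq (h ▸ hpq.symm)
  · exact hℓ.lt_of_dvd_of_ne hp h

theorem common_divisor_lt (hℓ : IsLengthFunction ℓ) (huv : u ≠ v) (hlen : ℓ u = ℓ v)
    (hu : r ∣ u) (hv : r ∣ v) : ℓ r < ℓ u := by
  by_cases h : r = u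
  · exact hlen ▸ hℓ.lt_of_dvd_of_ne hv (h ▸ huv)
  · exact hℓ.lt_of_dvd_of_ne hu h

theorem not_exists_dvd_iff_dvd_and_dvd (hℓ : IsLengthFunction ℓ)
    (hpq : p ≠ q) (hlen_pq : ℓ p = ℓ q) (huv : u ≠ v) (hlen_uv : ℓ u = ℓ v)
    (hlen : ℓ u = ℓ p + 1) (hu : p ∣ u ∧ q ∣ u) (hv : p ∣ v ∧ q ∣ v) :
    ¬ ∃ r, ∀ x, r ∣ x ↔ p ∣ x ∧ q ∣ x := by
  rintro ⟨r, hr⟩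
  obtain ⟨hpr, hqr⟩ := (hr r).1 dvd_rfl
  have lower : ℓ p < ℓ r := hℓ.lt_common_multiple hpq hlen_pq hpr hqr
  have upper : ℓ r < ℓ u := hℓ.common_divisor_lt huv hlen_uv ((hr u).2 hu) ((hr v).2 hv)
  omega

end IsLengthFunction

section Presentation

variable {n : ℕ}

theorem mk_eq_mk_of_rel {u v : FreeMonoid (Letter n)} (h : rel n u v) : mk n u = mk n v :=
  (Con.eq _).2 (ConGen.Rel.of _ _ h)

theorem gen_d_mul_gen_a (h : 0 < n) :
    gen (.d : Letter n) * gen .a = gen (.A ⟨0, h⟩) * gen (.C ⟨0, h⟩) :=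
  mk_eq_mk_of_rel (rel.da h)

theorem gen_A_last_mul_gen_D_last (h : 0 < n) :
    gen (.A ⟨n - 1, Nat.sub_lt h Nat.one_pos⟩) * gen (.D ⟨n - 1, Nat.sub_lt h Nat.one_pos⟩) =
      gen (.d : Letter n) * gen .b :=
  mk_eq_mk_of_rel (rel.An h)

theorem mem_rIdeal {p x : Mn n} : x ∈ rIdeal p ↔ p ∣ x := Iff.rfl

namespace Mn

/-- The universal property of the presentation of `M_n`: a map on letters into a monoid that
respects `ρ_n` extends to a homomorphism on `M_n`. -/
def lift {N : Type*} [Monoid N] (f : Letter n → N)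
    (hf : ∀ u v, rel n u v → FreeMonoid.lift f u = FreeMonoid.lift f v) : Mn n →* N :=
  (Mcon n).lift (FreeMonoid.lift f) (Con.conGen_le.2 hf)

theorem lift_gen {N : Type*} [Monoid N] (f : Letter n → N)
    (hf : ∀ u v, rel n u v → FreeMonoid.lift f u = FreeMonoid.lift f v) (x : Letter n) :
    lift f hf (gen x) = f x := rfl

/-- The length of an element of `M_n`, namely the common length of the words representing it. The
additive monoid `ℕ` enters as `Multiplicative ℕ`, a multiplicative target for `lift`. -/
def length (x : Mn n) : ℕ :=
  (lift (fun _ => Multiplicative.ofAdd 1) (by rintro _ _ (_ | _ | _ | _ | _) <;> rfl) x).toAdd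

theorem length_gen (x : Letter n) : length (gen x) = 1 := rfl

theorem length_mul (x y : Mn n) : length (x * y) = length x + length y := by
  simp only [length, map_mul, toAdd_mul]

theorem eq_one_of_length_eq_zero {x : Mn n} (hx : length x = 0) : x = 1 := by
  obtain ⟨w, rfl⟩ : ∃ w, mk n w = x := Con.mk'_surjective x
  cases w using FreeMonoid.casesOn with
  | one => exact map_one _
  | of_mul y w =>
    have hlen : length (mk n (of y * w)) = 1 + length (mk n w) := by
      rw [map_mul, length_mul, ← gen, length_gen]
    omega

theorem isLengthFunction_length : IsLengthFunction (length : Mn n → ℕ) :=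
  ⟨length_mul, eq_one_of_length_eq_zero⟩

end Mn

theorem gen_A_ne_gen_d (i : Fin n) : gen (.A i) ≠ gen .d := by
  -- Each side of every relation contains exactly one letter among `a`, `b`, the `A_j` and the
  -- `B_j`, so the parity of the number of such letters is an invariant.
  let sign : Letter n → ℤˣ
    | .a | .b | .A _ | .B _ => -1
    | _ => 1
  have hsign : ∀ u v, rel n u v → FreeMonoid.lift sign u = FreeMonoid.lift sign v := by
    rintro _ _ (_ | _ | _ | _ | _) <;> rfl
  intro h
  have : (-1 : ℤˣ) = 1 := congrArg (Mn.lift sign hsign) h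
  exact absurd this (by decide)

theorem gen_d_mul_gen_a_ne_gen_d_mul_gen_b : gen (.d : Letter n) * gen .a ≠ gen .d * gen .b := by
  -- Only `da = A_1C_1` involves `a` or `C_1`, and each side contains exactly one of them, so the
  -- parity of the number of occurrences of `a` and `C_1` is an invariant.
  let sign : Letter n → ℤˣ
    | .a => -1
    | .C i => if i.val = 0 then -1 else 1
    | _ => 1
  have hsign : ∀ u v, rel n u v → FreeMonoid.lift sign u = FreeMonoid.lift sign v := by
    rintro _ _ (_ | _ | _ | _ | _) <;> rfl
  intro h
  have : (-1 : ℤˣ) = 1 := by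
    simpa only [map_mul, Mn.lift_gen, sign, one_mul] using congrArg (Mn.lift sign hsign) h
  exact absurd this (by decide)

end Presentation

/-- `M_1` is not singly aligned, witnessed by `A_1M_1 ∩ dM_1`. -/
theorem M1_not_singly_aligned :
    (rIdeal (gen (Letter.A (0 : Fin 1))) ∩ rIdeal (gen (Letter.d : Letter 1))).Nonempty ∧
    ¬ ∃ r : Mn 1,
      rIdeal (gen (Letter.A (0 : Fin 1))) ∩ rIdeal (gen (Letter.d : Letter 1)) = rIdeal r := by
  have hda : gen (.A (0 : Fin 1)) ∣ gen .d * gen .a ∧ gen (.d : Letter 1) ∣ gen .d * gen .a :=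
    ⟨⟨_, gen_d_mul_gen_a Nat.one_pos⟩, dvd_mul_right _ _⟩
  have hdb : gen (.A (0 : Fin 1)) ∣ gen .d * gen .b ∧ gen (.d : Letter 1) ∣ gen .d * gen .b :=
    ⟨⟨_, (gen_A_last_mul_gen_D_last Nat.one_pos).symm⟩, dvd_mul_right _ _⟩
  refine ⟨⟨_, hda⟩, ?_⟩
  rintro ⟨r, hr⟩
  refine Mn.isLengthFunction_length.not_exists_dvd_iff_dvd_and_dvd (gen_A_ne_gen_d 0) ?_
    gen_d_mul_gen_a_ne_gen_d_mul_gen_b ?_ ?_ hda hdb ⟨r, fun x => ?_⟩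
  · simp only [Mn.length_gen]
  · simp only [Mn.length_mul, Mn.length_gen]
  · simp only [Mn.length_mul, Mn.length_gen]
  · rw [← mem_rIdeal, ← hr, Set.mem_inter_iff, mem_rIdeal, mem_rIdeal]

end Malcev
end

section
/- In the monoid M_1, the intersection A_1M_1 ∩ dM_1 equals (A_1C_1)M_1 ∪ (A_1D_1)M_1, i.e. the right ideal generated by the two elements A_1C_1 and A_1D_1. -/
namespace Malcev

open FreeMonoid

/-!
The defining relations identify two-letter words along two chains,
`da = A_1C_1, A_1D_1 = A_2C_2, …, A_nD_n = db` and `B_1D_1 = B_2C_2, …, B_nD_n = cb`.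
In each such word the second letter never begins one, so occurrences of these words do not
overlap. Hence an element of `M_n` determines the beginning of its words: either a fixed first
letter, or a fixed place in a chain. If `A_iu = dv`, the first letters differ, so both words begin
with words from the same place of the first chain. The words there that begin with `d` are `da`
and `db`, at its two ends, and `A_i` begins only `A_iC_i` and `A_iD_i`, at the places `i - 1`
and `i`.
-/

variable {n : ℕ}

/-- The place of a two-letter word in the chains of words identified by `ρ_n`: `inl k` for the
`k`-th link of `da = A_1C_1, …, A_nD_n = db` and `inr k` for that of `B_1C_1, …, B_nD_n = cb`, with
`k` counted from `0` to `n`, and `none` for a word in neither chain. As indices in `Fin n` are one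
less than the subscripts, `A i C i` is at place `i` and `A i D i` at place `i + 1`. The word
`B_1C_1`, which occurs in no relation, is alone at `inr 0`. -/
def chainPlace : Letter n → Letter n → Option (ℕ ⊕ ℕ)
  | .d, .a => some (.inl 0)
  | .d, .b => some (.inl n)
  | .A i, .C j => if i = j then some (.inl i) else none
  | .A i, .D j => if i = j then some (.inl (i + 1)) else none
  | .c, .b => some (.inr n)
  | .B i, .C j => if i = j then some (.inr i) else none
  | .B i, .D j => if i = j then some (.inr (i + 1)) else none
  | _, _ => none

theorem inQ_of_chainPlace_eq_some {x z : Letter n} {k : ℕ ⊕ ℕ} (h : chainPlace x z = some k) :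
    inQ z := by
  cases x <;> cases z <;> trivial

theorem chainPlace_eq_none_of_inQ {x : Letter n} (hx : inQ x) (z : Letter n) :
    chainPlace x z = none := by
  cases x <;> first | rfl | exact hx.elim

/-- How a word over `X_n` begins, up to the relations `ρ_n`: with a word at a given place of a
chain, or else with a given first letter. -/
inductive Head (n : ℕ) : Type
  | empty
  | letter (x : Letter n)
  | chain (k : ℕ ⊕ ℕ)

namespace Head

/-- The head of `xw`, given the head of `w`. -/
def cons (x : Letter n) : Head n → Head n
  | letter z => (chainPlace x z).elim (letter x) chain
  | _ => letter x

theorem cons_of_inQ {x : Letter n} (hx : inQ x) (s : Head n) : cons x s = letter x := by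
  cases s <;> simp [cons, chainPlace_eq_none_of_inQ hx]

theorem cons_cons_of_chainPlace_eq_some {x z : Letter n} {k : ℕ ⊕ ℕ}
    (h : chainPlace x z = some k) (s : Head n) : cons x (cons z s) = chain k := by
  rw [cons_of_inQ (inQ_of_chainPlace_eq_some h)]
  simp [cons, h]

theorem cons_eq_letter_or_chain (x : Letter n) (s : Head n) :
    cons x s = letter x ∨
      ∃ z k, s = letter z ∧ chainPlace x z = some k ∧ cons x s = chain k := by
  cases s with
  | letter z => cases h : chainPlace x z <;> simp [cons, h]
  | _ => exact .inl rfl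

theorem eq_of_cons_eq_letter {x y : Letter n} {s : Head n} (h : cons x s = letter y) :
    x = y := by
  obtain hx | ⟨z, k, -, -, hx⟩ := cons_eq_letter_or_chain x s
  · exact letter.inj (hx.symm.trans h)
  · cases hx.symm.trans h

theorem exists_chainPlace_eq_of_cons_eq_cons {x y : Letter n} {s t : Head n} (hxy : x ≠ y)
    (h : cons x s = cons y t) :
    ∃ z w k, s = letter z ∧ t = letter w ∧ chainPlace x z = some k ∧ chainPlace y w = some k := by
  obtain hx | ⟨z, k, hs, hz, hx⟩ := cons_eq_letter_or_chain x s
  · exact absurd (eq_of_cons_eq_letter (h.symm.trans hx)).symm hxy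
  obtain hy | ⟨w, l, ht, hw, hy⟩ := cons_eq_letter_or_chain y t
  · exact absurd (eq_of_cons_eq_letter (h.trans hy)) hxy
  obtain rfl : k = l := chain.inj (hx.symm.trans (h.trans hy))
  exact ⟨z, w, k, hs, ht, hz, hw⟩

end Head

theorem exists_chainPlace_eq_of_rel {u v : FreeMonoid (Letter n)} (h : rel n u v) :
    ∃ x z y w k, u = of x * of z ∧ v = of y * of w ∧
      chainPlace x z = some k ∧ chainPlace y w = some k := by
  cases h with
  | da h => exact ⟨_, _, _, _, .inl 0, rfl, rfl, rfl, by simp [chainPlace]⟩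
  | AD i h =>
    exact ⟨_, _, _, _, .inl (i + 1), rfl, rfl, by simp [chainPlace], by simp [chainPlace]⟩
  | An h =>
    exact ⟨_, _, _, _, .inl n, rfl, rfl, by simp [chainPlace, Nat.sub_add_cancel h], rfl⟩
  | cb h =>
    exact ⟨_, _, _, _, .inr n, rfl, rfl, rfl, by simp [chainPlace, Nat.sub_add_cancel h]⟩
  | BC i h =>
    exact ⟨_, _, _, _, .inr (i + 1), rfl, rfl, by simp [chainPlace], by simp [chainPlace]⟩

/-- The left action of `X_n*` on heads, by prepending letters. -/
def wordAction (n : ℕ) : FreeMonoid (Letter n) →* Function.End (Head n) :=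
  FreeMonoid.lift Head.cons

theorem Mcon_le_ker_wordAction (n : ℕ) : Mcon n ≤ Con.ker (wordAction n) := by
  refine Con.conGen_le.2 fun u v h => ?_
  obtain ⟨x, z, y, w, k, rfl, rfl, hxz, hyw⟩ := exists_chainPlace_eq_of_rel h
  rw [Con.ker_rel]
  funext s
  exact (Head.cons_cons_of_chainPlace_eq_some hxz s).trans
    (Head.cons_cons_of_chainPlace_eq_some hyw s).symm

/-- The head of an element of `M_n`, that is, of any word representing it. -/
def head (m : Mn n) : Head n :=
  (Mcon n).lift (wordAction n) (Mcon_le_ker_wordAction n) m .empty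

theorem head_one : head (1 : Mn n) = .empty := by
  rw [head, map_one]
  rfl

theorem head_gen_mul (x : Letter n) (m : Mn n) : head (gen x * m) = .cons x (head m) := by
  rw [head, map_mul]
  rfl

theorem eq_one_or_eq_gen_mul (m : Mn n) : m = 1 ∨ ∃ x m', m = gen x * m' := by
  obtain ⟨w, rfl⟩ := Con.mk'_surjective m
  cases w using FreeMonoid.casesOn with
  | one => exact .inl (map_one _)
  | of_mul x w => exact .inr ⟨x, mk n w, map_mul _ _ _⟩

theorem mem_rIdeal_gen_of_head_eq_letter {m : Mn n} {x : Letter n} (h : head m = .letter x) :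
    m ∈ rIdeal (gen x) := by
  obtain rfl | ⟨y, m, rfl⟩ := eq_one_or_eq_gen_mul m
  · cases head_one.symm.trans h
  · rw [head_gen_mul] at h
    exact ⟨m, by rw [Head.eq_of_cons_eq_letter h]⟩

theorem exists_chainPlace_eq_of_gen_mul_eq_gen_mul {x y : Letter n} {u v : Mn n} (hxy : x ≠ y)
    (h : gen x * u = gen y * v) :
    ∃ z w k, chainPlace x z = some k ∧ chainPlace y w = some k ∧
      u ∈ rIdeal (gen z) ∧ v ∈ rIdeal (gen w) := by
  have hcons : Head.cons x (head u) = .cons y (head v) := by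
    rw [← head_gen_mul, h, head_gen_mul]
  obtain ⟨z, w, k, hu, hv, hz, hw⟩ := Head.exists_chainPlace_eq_of_cons_eq_cons hxy hcons
  exact ⟨z, w, k, hz, hw, mem_rIdeal_gen_of_head_eq_letter hu, mem_rIdeal_gen_of_head_eq_letter hv⟩

theorem chainPlace_d_eq_some {w : Letter n} {k : ℕ ⊕ ℕ} (h : chainPlace .d w = some k) :
    k = .inl 0 ∨ k = .inl n := by
  cases w <;> simp_all [chainPlace]

theorem chainPlace_A_eq_some {i : Fin n} {z : Letter n} {k : ℕ ⊕ ℕ}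
    (h : chainPlace (.A i) z = some k) :
    z = .C i ∧ k = .inl i.val ∨ z = .D i ∧ k = .inl (i.val + 1) := by
  cases z <;> simp_all [chainPlace]

theorem eq_C_or_eq_D_of_chainPlace_A_eq_chainPlace_d {i : Fin n} {z w : Letter n} {k : ℕ ⊕ ℕ}
    (hz : chainPlace (.A i) z = some k) (hw : chainPlace .d w = some k) :
    (i.val = 0 ∧ z = .C i) ∨ (i.val + 1 = n ∧ z = .D i) := by
  obtain ⟨rfl, rfl⟩ | ⟨rfl, rfl⟩ := chainPlace_A_eq_some hz <;>
    simpa [i.isLt.ne] using chainPlace_d_eq_some hw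

theorem gen_A_mul_gen_C_of_val_eq_zero {i : Fin n} (hi : i.val = 0) :
    gen (.A i) * gen (.C i) = (gen .d * gen .a : Mn n) := by
  obtain ⟨i, hin⟩ := i
  obtain rfl : i = 0 := hi
  exact (mk_eq_mk_of_rel (.da hin)).symm

theorem gen_A_mul_gen_D_of_val_add_one_eq {i : Fin n} (hi : i.val + 1 = n) :
    gen (.A i) * gen (.D i) = (gen .d * gen .b : Mn n) := by
  obtain ⟨i, hin⟩ := i
  obtain rfl : i + 1 = n := hi
  exact mk_eq_mk_of_rel (.An i.succ_pos)

theorem rIdeal_mul_subset (p q : Mn n) : rIdeal (p * q) ⊆ rIdeal p := by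
  rintro _ ⟨m, rfl⟩
  exact ⟨q * m, mul_assoc p q m⟩

theorem mul_mem_rIdeal_mul (p : Mn n) {q m : Mn n} (hm : m ∈ rIdeal q) :
    p * m ∈ rIdeal (p * q) := by
  obtain ⟨m', rfl⟩ := hm
  exact ⟨m', (mul_assoc p q m').symm⟩

theorem M1_intersection_eq_general (i : Fin n) :
    rIdeal (gen (.A i)) ∩ rIdeal (gen .d) =
      (⋃ _ : i.val = 0, rIdeal (gen (.A i) * gen (.C i))) ∪
      ⋃ _ : i.val + 1 = n, rIdeal (gen (.A i) * gen (.D i)) := by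
  apply Set.Subset.antisymm
  · rintro _ ⟨⟨u, rfl⟩, v, huv⟩
    obtain ⟨z, w, k, hz, hw, hu, -⟩ :=
      exists_chainPlace_eq_of_gen_mul_eq_gen_mul (show Letter.A i ≠ .d from nofun) huv
    obtain ⟨hi, rfl⟩ | ⟨hi, rfl⟩ := eq_C_or_eq_D_of_chainPlace_A_eq_chainPlace_d hz hw
    · exact .inl (Set.mem_iUnion.2 ⟨hi, mul_mem_rIdeal_mul _ hu⟩)
    · exact .inr (Set.mem_iUnion.2 ⟨hi, mul_mem_rIdeal_mul _ hu⟩)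
  · refine Set.union_subset (Set.iUnion_subset fun hi => ?_) (Set.iUnion_subset fun hi => ?_) <;>
      refine Set.subset_inter (rIdeal_mul_subset _ _) ?_
    · exact gen_A_mul_gen_C_of_val_eq_zero hi ▸ rIdeal_mul_subset _ _
    · exact gen_A_mul_gen_D_of_val_add_one_eq hi ▸ rIdeal_mul_subset _ _

/-- `A_1M_1 ∩ dM_1 = (A_1C_1)M_1 ∪ (A_1D_1)M_1`. -/
theorem M1_intersection_eq :
    rIdeal (gen (Letter.A (0 : Fin 1))) ∩ rIdeal (gen (Letter.d : Letter 1)) =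
      rIdeal (gen (Letter.A (0 : Fin 1)) * gen (Letter.C (0 : Fin 1))) ∪
      rIdeal (gen (Letter.A (0 : Fin 1)) * gen (Letter.D (0 : Fin 1))) := by
  simpa using M1_intersection_eq_general (0 : Fin 1)

end Malcev
end

section
/- The semigroup S_1 = Sgp⟨a, b, c, d, u, v, x, y | ax = by, au = bv, cx = dy⟩ is cancellative, and it is not group-embeddable: for every group G and every multiplicative homomorphism φ : S_1 → G, φ is not injective. -/
namespace Malcev

/-- The alphabet of Malcev's original semigroup: letters `a, b, c, d, u, v, x, y`. -/
inductive YLetter : Type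
  | a | b | c | d | u | v | x | y
  deriving DecidableEq

/-- The defining relations `σ = {(ax, by), (au, bv), (cx, dy)}`. -/
inductive srel : FreeSemigroup YLetter → FreeSemigroup YLetter → Prop
  | r1 : srel (.of .a * .of .x) (.of .b * .of .y)
  | r2 : srel (.of .a * .of .u) (.of .b * .of .v)
  | r3 : srel (.of .c * .of .x) (.of .d * .of .y)

/-- The presented semigroup `S_1 = Sgp⟨a, b, c, d, u, v, x, y | ax = by, au = bv, cx = dy⟩`. -/
abbrev S1 : Type := (conGen srel).Quotient

/-!
In the rewriting system `ax → by`, `au → bv`, `cx → dy` the rules do not overlap, so multiplying a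
normal form on the left by a letter prepends one letter and alters at most the next one, and does so
injectively. Thus `S_1` acts on words by injective maps, and an element is recovered from its action
on the empty word, which produces its normal form; hence `S_1` is left cancellative. The exchange
`a ↔ x`, `b ↔ y`, `c ↔ u`, `d ↔ v` turns the reversed relations into the relations, which gives
right cancellation. In a group the three relations force `cu = dv`, whereas `cu` and `dv` are
distinct normal forms.
-/

/-- The semigroup generated by `α` subject to the relations `r`, the analogue of `PresentedMonoid`
without identity. It is reducible so that `S1` unifies with `PresentedSemigroup srel`. -/
abbrev PresentedSemigroup {α : Type*} (r : FreeSemigroup α → FreeSemigroup α → Prop) : Type _ :=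
  (conGen r).Quotient

namespace PresentedSemigroup

variable {α : Type*} {r : FreeSemigroup α → FreeSemigroup α → Prop}

/-- The generator of a presented semigroup given by a letter. -/
def of (r : FreeSemigroup α → FreeSemigroup α → Prop) (p : α) : PresentedSemigroup r :=
  (conGen r).mkMulHom (.of p)

@[elab_as_elim]
theorem induction_on {C : PresentedSemigroup r → Prop} (s : PresentedSemigroup r)
    (of : ∀ p, C (of r p)) (of_mul : ∀ p t, C t → C (PresentedSemigroup.of r p * t)) : C s :=
  Con.induction_on s fun w => FreeSemigroup.recOnMul w of fun p w _ => of_mul p w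

/-- The homomorphism out of a presented semigroup extending a map on letters that satisfies the
relations. -/
def lift {β : Type*} [Semigroup β] (f : α → β)
    (hf : ∀ w z, r w z → FreeSemigroup.lift f w = FreeSemigroup.lift f z) :
    PresentedSemigroup r →ₙ* β where
  toFun s := Con.liftOn s (FreeSemigroup.lift f)
    (Con.conGen_le (c := Con.ker (FreeSemigroup.lift f)).2 hf)
  map_mul' s t := Con.induction_on₂ s t (map_mul (FreeSemigroup.lift f))

@[simp]
theorem lift_of {β : Type*} [Semigroup β] (f : α → β)
    (hf : ∀ w z, r w z → FreeSemigroup.lift f w = FreeSemigroup.lift f z) (p : α) :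
    lift f hf (of r p) = f p :=
  rfl

section Action

variable {X : Type*} (f : α → Function.End X)
  (hf : ∀ w z, r w z → FreeSemigroup.lift f w = FreeSemigroup.lift f z)

theorem lift_mul_apply (s t : PresentedSemigroup r) (x : X) :
    lift f hf (s * t) x = lift f hf s (lift f hf t x) :=
  congrFun (map_mul (lift f hf) s t) x

theorem lift_apply_injective (hinj : ∀ p, Function.Injective (f p)) (s : PresentedSemigroup r) :
    Function.Injective (lift f hf s) := by
  induction s using induction_on with
  | of p => exact hinj p
  | of_mul p t ht =>
    rw [map_mul]
    exact (hinj p).comp ht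

theorem apply_lift_apply {π : X → WithOne (PresentedSemigroup r)}
    (hπ : ∀ p x, π (f p x) = of r p * π x) (s : PresentedSemigroup r) (x : X) :
    π (lift f hf s x) = s * π x := by
  induction s using induction_on with
  | of p => exact hπ p x
  | of_mul p t ht => rw [lift_mul_apply, lift_of, hπ, ht, WithOne.coe_mul, mul_assoc]

include hf in
theorem isLeftCancelMul_of_injective_action (hinj : ∀ p, Function.Injective (f p))
    {π : X → WithOne (PresentedSemigroup r)} (hπ : ∀ p x, π (f p x) = of r p * π x)
    {x₀ : X} (hx₀ : π x₀ = 1) : IsLeftCancelMul (PresentedSemigroup r) where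
  mul_left_cancel s t₁ t₂ h := by
    have hact : lift f hf t₁ x₀ = lift f hf t₂ x₀ := by
      apply lift_apply_injective f hf hinj s
      simpa only [lift_mul_apply] using congrArg (lift f hf · x₀) h
    simpa only [apply_lift_apply f hf hπ, hx₀, mul_one, WithOne.coe_inj] using congrArg π hact

end Action

end PresentedSemigroup

namespace S1

open PresentedSemigroup (lift)

/-- The generator of `S_1` corresponding to a letter. -/
abbrev of : YLetter → S1 := PresentedSemigroup.of srel

theorem of_a_mul_of_x : of .a * of .x = of .b * of .y :=
  (Con.eq _).2 (.of _ _ .r1)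

theorem of_a_mul_of_u : of .a * of .u = of .b * of .v :=
  (Con.eq _).2 (.of _ _ .r2)

theorem of_c_mul_of_x : of .c * of .x = of .d * of .y :=
  (Con.eq _).2 (.of _ _ .r3)

/-- Left multiplication by a letter on normal forms of the rewriting system
`ax → by`, `au → bv`, `cx → dy`. It is defined on all words, including those not in normal form. -/
def push : YLetter → Function.End (List YLetter)
  | .a, .x :: l => .b :: .y :: l
  | .a, .u :: l => .b :: .v :: l
  | .c, .x :: l => .d :: .y :: l
  | p, l => p :: l

theorem push_injective (p : YLetter) : Function.Injective (push p) := by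
  intro l m h
  unfold push at h
  split at h <;> split at h <;> simp_all

theorem lift_push_eq_of_srel (w z : FreeSemigroup YLetter) (h : srel w z) :
    FreeSemigroup.lift push w = FreeSemigroup.lift push z := by
  cases h <;> rfl

/-- The value of a word in `S_1`; an identity is adjoined to accommodate the empty word. -/
def eval (l : List YLetter) : WithOne S1 := (l.map fun p => (of p : WithOne S1)).prod

theorem eval_nil : eval [] = 1 := rfl

theorem eval_cons (p : YLetter) (l : List YLetter) : eval (p :: l) = of p * eval l :=
  List.prod_cons

theorem eval_push (p : YLetter) (l : List YLetter) : eval (push p l) = of p * eval l := by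
  unfold push
  split <;> simp only [eval_cons, ← mul_assoc, ← WithOne.coe_mul, of_a_mul_of_x, of_a_mul_of_u,
    of_c_mul_of_x]

instance : IsLeftCancelMul S1 :=
  PresentedSemigroup.isLeftCancelMul_of_injective_action push lift_push_eq_of_srel push_injective
    eval_push eval_nil

/-- The involution of the alphabet carrying the reversed relations to the relations. -/
def swap : YLetter → YLetter
  | .a => .x
  | .x => .a
  | .b => .y
  | .y => .b
  | .c => .u
  | .u => .c
  | .d => .v
  | .v => .d

/-- The involutive anti-automorphism of `S_1` induced by `swap`. -/
def reverse : S1 →ₙ* S1ᵐᵒᵖ :=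
  lift (fun p => .op (of (swap p))) fun
    | _, _, .r1 => congrArg MulOpposite.op of_a_mul_of_x
    | _, _, .r2 => congrArg MulOpposite.op of_c_mul_of_x
    | _, _, .r3 => congrArg MulOpposite.op of_a_mul_of_u

theorem leftInverse_reverse :
    Function.LeftInverse (fun s : S1ᵐᵒᵖ => (reverse s.unop).unop) reverse := by
  intro s
  induction s using PresentedSemigroup.induction_on with
  | of p => cases p <;> rfl
  | of_mul p t ht =>
    have hp : (reverse (reverse (of p)).unop).unop = of p := by cases p <;> rfl
    simp only [map_mul, MulOpposite.unop_mul, hp, ht]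

instance : IsRightCancelMul S1 :=
  leftInverse_reverse.injective.isRightCancelMul reverse (map_mul reverse)

theorem of_c_mul_of_u_ne_of_d_mul_of_v : of .c * of .u ≠ of .d * of .v := by
  let normalForm (s : S1) : List YLetter := lift push lift_push_eq_of_srel s []
  have hcu : normalForm (of .c * of .u) = [.c, .u] := rfl
  have hdv : normalForm (of .d * of .v) = [.d, .v] := rfl
  exact ne_of_apply_ne normalForm (by simp [hcu, hdv])

end S1

theorem malcev_condition {G : Type*} [Group G] {a b c d u v x y : G} (hax : a * x = b * y)
    (hau : a * u = b * v) (hcx : c * x = d * y) : c * u = d * v :=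
  calc
    c * u = c * x * (a * x)⁻¹ * (a * u) := by group
    _ = d * y * (b * y)⁻¹ * (b * v) := by rw [hcx, hax, hau]
    _ = d * v := by group

theorem S1.map_of_c_mul_of_u {G : Type*} [Group G] (φ : S1 →ₙ* G) :
    φ (of .c * of .u) = φ (of .d * of .v) := by
  have hax := congrArg φ of_a_mul_of_x
  have hau := congrArg φ of_a_mul_of_u
  have hcx := congrArg φ of_c_mul_of_x
  rw [map_mul, map_mul] at hax hau hcx ⊢
  exact malcev_condition hax hau hcx

/-- `S_1` is cancellative but not group-embeddable. -/
theorem S1_cancellative_not_embeddable :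
    (∀ a b c : S1, (c * a = c * b → a = b) ∧ (a * c = b * c → a = b)) ∧
    (∀ (G : Type*) [Group G] (φ : S1 →ₙ* G), ¬ Function.Injective φ) :=
  ⟨fun _ _ _ => ⟨mul_left_cancel, mul_right_cancel⟩,
    fun _ _ φ hφ => S1.of_c_mul_of_u_ne_of_d_mul_of_v (hφ (S1.map_of_c_mul_of_u φ))⟩

end Malcev
end

section
/- For every integer n ≥ 1, the monoid M_n is not right rigid: there exist p, q ∈ M_n with pM_n ∩ qM_n ≠ ∅, p ∉ qM_n and q ∉ pM_n (indeed p = A_1 and q = d witness this). -/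
namespace Malcev

open FreeMonoid

theorem mem_rIdeal_iff_dvd {n : ℕ} {p x : Mn n} : x ∈ rIdeal p ↔ p ∣ x :=
  Iff.rfl

theorem gen_mul_gen_eq_of_rel {n : ℕ} {w x y z : Letter n}
    (h : rel n (of w * of x) (of y * of z)) : gen w * gen x = gen y * gen z :=
  (Con.eq _).mpr (ConGen.Rel.of _ _ h)

theorem rIdeal_gen_A_inter_rIdeal_gen_d_nonempty {n : ℕ} (hn : 0 < n) :
    (rIdeal (gen (.A ⟨0, hn⟩)) ∩ rIdeal (gen (.d : Letter n))).Nonempty :=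
  ⟨gen .d * gen .a, ⟨gen (.C ⟨0, hn⟩), gen_mul_gen_eq_of_rel (.da hn)⟩, ⟨gen .a, rfl⟩⟩

section LetterValue

variable {N : Type*} [Monoid N] {n : ℕ}

/-- The map from letters to a monoid with value `s` on `c, d, C_i, D_i` and `t` on
`a, b, A_i, B_i`. The two classes are chosen so that every word occurring in `ρ_n` contains
one letter of each. -/
def letterValue (s t : N) : Letter n → N
  | .c | .d | .C _ | .D _ => s
  | .a | .b | .A _ | .B _ => t

theorem lift_letterValue_eq_of_rel {s t : N} (hst : Commute s t) {u v : FreeMonoid (Letter n)}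
    (h : rel n u v) :
    FreeMonoid.lift (letterValue s t) u = FreeMonoid.lift (letterValue s t) v := by
  cases h <;> simp [letterValue, hst.eq]

/-- The homomorphism from `M_n` induced by `letterValue s t`, for commuting `s` and `t`. It serves
as an invariant detecting when one element of `M_n` is not a right multiple of another. -/
def letterValueHom {s t : N} (hst : Commute s t) : Mn n →* N :=
  (Mcon n).lift (FreeMonoid.lift (letterValue s t)) <|
    Con.conGen_le.mpr fun _ _ h => lift_letterValue_eq_of_rel hst h

theorem letterValueHom_gen {s t : N} (hst : Commute s t) (x : Letter n) :
    letterValueHom hst (gen x) = letterValue s t x :=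
  rfl

theorem letterValue_dvd_of_gen_mem_rIdeal {s t : N} (hst : Commute s t) {x y : Letter n}
    (h : gen y ∈ rIdeal (gen x)) : letterValue s t x ∣ letterValue s t y := by
  simpa only [letterValueHom_gen] using map_dvd (letterValueHom hst) (mem_rIdeal_iff_dvd.mp h)

end LetterValue

theorem gen_A_notMem_rIdeal_gen_d {n : ℕ} (i : Fin n) : gen (.A i) ∉ rIdeal (gen .d) := fun h =>
  have two_dvd_three : 2 ∣ 3 := letterValue_dvd_of_gen_mem_rIdeal (Commute.all 2 3) h
  absurd two_dvd_three (by decide)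

theorem gen_d_notMem_rIdeal_gen_A {n : ℕ} (i : Fin n) : gen .d ∉ rIdeal (gen (.A i)) := fun h =>
  have three_dvd_two : 3 ∣ 2 := letterValue_dvd_of_gen_mem_rIdeal (Commute.all 2 3) h
  absurd three_dvd_two (by decide)

/-- `M_n` is not right rigid, witnessed by `p = A_1` and `q = d`. -/
theorem Mn_not_right_rigid (n : ℕ) (hn : 1 ≤ n) :
    ∃ p q : Mn n, (rIdeal p ∩ rIdeal q).Nonempty ∧ p ∉ rIdeal q ∧ q ∉ rIdeal p ∧
      p = gen (Letter.A ⟨0, hn⟩) ∧ q = gen (Letter.d : Letter n) := by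
  exact ⟨_, _, rIdeal_gen_A_inter_rIdeal_gen_d_nonempty hn, gen_A_notMem_rIdeal_gen_d _,
    gen_d_notMem_rIdeal_gen_A _, rfl, rfl⟩

end Malcev
end
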